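/- Let V(n; i, j) denote the number of pairs (π₁, π₂) where π₁ is a partition into exactly i distinct positive integer parts (a-parts), π₂ is a partition into exactly j distinct positive integer parts (b-parts), and the combined sum of all parts is n. Let S(n; r, s, t) denote the number of Type-1 partitions of n having exactly r parts of color a, s parts of color b, and t parts of color ab. Then V(n; i, j) = \sum_{r+t=i, s+t=j} S(n; r, s, t). -/

import Mathlib

/-- The three colors `a`, `b`, `ab` of the Alladi–Gordon weighted words. -/
inductive PColor | a | b | ab
deriving DecidableEq

/-- A colored part: a color together with a subscript (the integer being colored). -/
abbrev CPart := PColor × ℕ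

/-- A Type-1 partition: a list of valid colored symbols (`a_m, b_m` for `m ≥ 1`,
`ab_m` for `m ≥ 2`) whose subscripts decrease with gap `≥ 1` between consecutive
symbols, the gap being `≥ 2` when the larger symbol has color `ab`, or the larger
symbol has color `a` and the smaller one has color `b`.  (A gap `≥ 1` in subscripts
already forces the symbols to be strictly decreasing in the total order
`a_1 < b_1 < ab_2 < a_2 < b_2 < ab_3 < a_3 < b_3 < ⋯`.) -/
def IsType1 (π : List CPart) : Prop :=
  (∀ p ∈ π, 1 ≤ p.2 ∧ (p.1 = PColor.ab → 2 ≤ p.2)) ∧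
  π.Chain' (fun x y => y.2 + 1 ≤ x.2 ∧
    ((x.1 = PColor.ab ∨ (x.1 = PColor.a ∧ y.1 = PColor.b)) → y.2 + 2 ≤ x.2))

/-- Number of parts of a given color. -/
def colorCount (c : PColor) (π : List CPart) : ℕ := (π.filter (fun p => p.1 = c)).length

/-- The sum of the subscripts (the number being partitioned). -/
def wt (π : List CPart) : ℕ := (π.map Prod.snd).sum

/-- `V n i j`: the number of vector partitions `(π₁, π₂)` of `n` where `π₁` has exactly
`i` distinct (positive integer) a-parts and `π₂` has exactly `j` distinct b-parts. -/
noncomputable def V (n i j : ℕ) : ℕ :=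
  {p : List ℕ × List ℕ | p.1.Chain' (· > ·) ∧ p.2.Chain' (· > ·) ∧
    (∀ x ∈ p.1, 0 < x) ∧ (∀ x ∈ p.2, 0 < x) ∧
    p.1.length = i ∧ p.2.length = j ∧ p.1.sum + p.2.sum = n}.ncard

/-- `S n r s t`: the number of Type-1 partitions of `n` with exactly `r` a-parts,
`s` b-parts and `t` ab-parts. -/
noncomputable def S (n r s t : ℕ) : ℕ :=
  {π : List CPart | IsType1 π ∧ colorCount PColor.a π = r ∧ colorCount PColor.b π = s ∧
    colorCount PColor.ab π = t ∧ wt π = n}.ncard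

/-!
A Type-1 partition either stays Type-1 when all its subscripts are lowered by one, or ends in `a_1`,
`b_1` or `ab_2`; in the latter case the last part can be removed and the other subscripts lowered by
one, or by two if it was `ab_2`. This gives a recurrence in `r`, `s`, `t` for the generating
function of the Type-1 partitions with these numbers of parts, whose solution, with `T_n` the `n`-th
triangular number, is `q^(T_(r+s+t) + T_t) / ((q; q)_r (q; q)_s (q; q)_t)`. Partitions into `i`
distinct parts are the case `r = i`, `s = t = 0`, and so the theorem becomes
`∑ q^(T_(r+s+t) + T_t) / ((q; q)_r (q; q)_s (q; q)_t) = q^(T_i + T_j) / ((q; q)_i (q; q)_j)`,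
summed over `r + t = i`, `s + t = j`. As `T_(r+s+t) + T_t = T_i + T_j + r s`, this is Cauchy's
`q`-Vandermonde identity, proved by induction on `min i j`.
-/

namespace AlladiGordon

open Finset PowerSeries

section GeneratingFunctions

variable {α β ι : Type*} {w : α → ℕ} {v : β → ℕ} {A A' : Set α} {B : Set β}

/-- Only finitely many elements of `A` have any given weight: the condition under which `A` has a
generating function. -/
def FiniteFibers (w : α → ℕ) (A : Set α) : Prop := ∀ n, (A ∩ w ⁻¹' {n}).Finite

/-- The generating function `∑ x ∈ A, X ^ w x` of the elements of `A` by weight. A coefficient that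
would be infinite is `0`. -/
noncomputable def genFun (w : α → ℕ) (A : Set α) : ℤ⟦X⟧ :=
  mk fun n => ((A ∩ w ⁻¹' {n}).ncard : ℤ)

theorem coeff_genFun (w : α → ℕ) (A : Set α) (n : ℕ) :
    coeff n (genFun w A) = ((A ∩ w ⁻¹' {n}).ncard : ℤ) :=
  coeff_mk n _

theorem FiniteFibers.mono (h : FiniteFibers w A') (hA : A ⊆ A') : FiniteFibers w A :=
  fun n => (h n).subset (Set.inter_subset_inter_left _ hA)

theorem FiniteFibers.list (h : FiniteFibers w {x | 0 < w x}) :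
    FiniteFibers (fun l : List α => (l.map w).sum) {l | ∀ x ∈ l, 0 < w x} := by
  intro n
  induction n using Nat.strong_induction_on with
  | _ n ih =>
    have tails_finite (k : Set.Icc 1 n) := (h k).image2 List.cons (ih (n - k) (by grind))
    refine ((Set.finite_singleton []).union (Set.finite_iUnion tails_finite)).subset ?_
    rintro (_ | ⟨x, l⟩) ⟨hl, hn⟩
    · exact Or.inl rfl
    · obtain ⟨hx, hl⟩ := List.forall_mem_cons.1 hl
      have hn : w x + (l.map w).sum = n := hn
      refine Or.inr (Set.mem_iUnion.2 ⟨⟨w x, hx, by omega⟩, x, ⟨hx, rfl⟩, l, ⟨hl, ?_⟩, rfl⟩)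
      exact Nat.eq_sub_of_add_eq' hn

@[simp]
theorem genFun_empty (w : α → ℕ) : genFun w ∅ = 0 := by
  ext n
  simp [coeff_genFun]

@[simp]
theorem genFun_singleton (w : α → ℕ) (x : α) : genFun w {x} = X ^ w x := by
  ext n
  rw [coeff_genFun, coeff_X_pow]
  split_ifs with h
  · rw [Set.inter_eq_left.2 (by simpa using h.symm), Set.ncard_singleton, Nat.cast_one]
  · have fiber_empty : {x} ∩ w ⁻¹' {n} = ∅ := Set.singleton_inter_eq_empty.2 fun hx => h hx.symm
    rw [fiber_empty, Set.ncard_empty, Nat.cast_zero]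

theorem genFun_sdiff (hA : FiniteFibers w A) (h : A' ⊆ A) :
    genFun w (A \ A') = genFun w A - genFun w A' := by
  ext n
  have fiber_subset : A' ∩ w ⁻¹' {n} ⊆ A ∩ w ⁻¹' {n} := Set.inter_subset_inter_left _ h
  have fiber_sdiff : (A \ A') ∩ w ⁻¹' {n} = (A ∩ w ⁻¹' {n}) \ (A' ∩ w ⁻¹' {n}) := by
    grind
  rw [map_sub, coeff_genFun, coeff_genFun, coeff_genFun, fiber_sdiff,
    Set.cast_ncard_sdiff fiber_subset (hA n)]

theorem genFun_iUnion [Fintype ι] {A : ι → Set α} (hA : ∀ i, FiniteFibers w (A i))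
    (hd : Pairwise (Function.onFun Disjoint A)) :
    genFun w (⋃ i, A i) = ∑ i, genFun w (A i) := by
  ext n
  simp only [map_sum, coeff_genFun]
  rw [Set.iUnion_inter, Set.ncard_iUnion_of_finite (fun i => hA i n)
    fun i j hij => (hd hij).mono Set.inter_subset_left Set.inter_subset_left,
    finsum_eq_sum_of_fintype, Nat.cast_sum]

theorem genFun_image {f : α → β} {k : ℕ} (hf : A.InjOn f) (hw : ∀ x ∈ A, v (f x) = w x + k) :
    genFun v (f '' A) = X ^ k * genFun w A := by
  ext n
  rw [coeff_X_pow_mul', coeff_genFun]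
  split_ifs with h
  · have fiber_image : f '' A ∩ v ⁻¹' {n} = f '' (A ∩ w ⁻¹' {n - k}) := by
      grind
    rw [coeff_genFun, fiber_image, (hf.mono Set.inter_subset_left).ncard_image]
  · have fiber_empty : f '' A ∩ v ⁻¹' {n} = ∅ := by
      grind
    rw [fiber_empty, Set.ncard_empty, Nat.cast_zero]

theorem genFun_prod (hA : FiniteFibers w A) (hB : FiniteFibers v B) :
    genFun (fun p : α × β => w p.1 + v p.2) (A ×ˢ B) = genFun w A * genFun v B := by
  ext n
  let fiber (k : ℕ × ℕ) : Set (α × β) := (A ∩ w ⁻¹' {k.1}) ×ˢ (B ∩ v ⁻¹' {k.2})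
  have fiber_eq : (A ×ˢ B) ∩ (fun p : α × β => w p.1 + v p.2) ⁻¹' {n} =
      ⋃ k ∈ (antidiagonal n : Set (ℕ × ℕ)), fiber k := by
    ext p
    simp only [fiber, Set.mem_iUnion₂, mem_coe, HasAntidiagonal.mem_antidiagonal]
    constructor
    · rintro ⟨⟨hpA, hpB⟩, hn⟩
      exact ⟨(w p.1, v p.2), hn, ⟨hpA, rfl⟩, hpB, rfl⟩
    · rintro ⟨k, hk, ⟨hpA, hpw⟩, hpB, hpv⟩
      exact ⟨⟨hpA, hpB⟩, (congrArg₂ (· + ·) hpw hpv).trans hk⟩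
  have fiber_disjoint : (antidiagonal n : Set (ℕ × ℕ)).PairwiseDisjoint fiber := by
    intro k _ k' _ hne
    refine Set.disjoint_left.2 fun p hp hp' => hne ?_
    grind
  rw [coeff_mul, coeff_genFun, fiber_eq, (finite_toSet _).ncard_biUnion
    (fun k _ => (hA k.1).prod (hB k.2)) fiber_disjoint, finsum_mem_coe_finset, Nat.cast_sum]
  refine sum_congr rfl fun k _ => ?_
  rw [Set.ncard_prod, Nat.cast_mul, coeff_genFun, coeff_genFun]

end GeneratingFunctions
section FiniteIdentities

/-- `1 / (q; q)_n`, the reciprocal of the `q`-Pochhammer symbol `(1 - q)(1 - q²)⋯(1 - qⁿ)`. The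
factors are inverted by `Ring.inverse`, so the value is meaningful only if all of them are units. -/
noncomputable def qPochhammerInv {R : Type*} [CommRing R] (q : R) (n : ℕ) : R :=
  ∏ k ∈ range n, Ring.inverse (1 - q ^ (k + 1))

/-- The generating function `q^(T_(r+s+t) + T_t) / ((q; q)_r (q; q)_s (q; q)_t)` of the Type-1
partitions with `r` parts of color `a`, `s` of color `b` and `t` of color `ab`, where
`T_n = (n + 1).choose 2` is the `n`-th triangular number. -/
noncomputable def type1Series {R : Type*} [CommRing R] (q : R) (r s t : ℕ) : R :=
  q ^ ((r + s + t + 1).choose 2 + (t + 1).choose 2) *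
    (qPochhammerInv q r * qPochhammerInv q s * qPochhammerInv q t)

theorem choose_two_add (m n : ℕ) :
    (m + n + 1).choose 2 = (m + 1).choose 2 + (n + 1).choose 2 + m * n := by
  induction n with
  | zero => simp
  | succ n ih =>
    rw [← add_assoc m, Nat.choose_succ_succ' (m + n + 1), Nat.choose_succ_succ' (n + 1), ih]
    simp only [Nat.choose_one_right]
    ring

theorem choose_two_add_choose_two (r s t : ℕ) :
    (r + s + t + 1).choose 2 + (t + 1).choose 2 =
      (r + t + 1).choose 2 + (s + t + 1).choose 2 + r * s := by
  rw [choose_two_add (r + s) t, choose_two_add r s, choose_two_add r t, choose_two_add s t]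
  ring

theorem sum_range_min_eq_sum_antidiagonal {M : Type*} [AddCommMonoid M] (f : ℕ → ℕ → ℕ → M)
    (i d : ℕ) : ∑ t ∈ range (min i (i + d) + 1), f (i - t) (i + d - t) t =
      ∑ p ∈ antidiagonal i, f p.1 (p.1 + d) p.2 := by
  rw [← Nat.sum_antidiagonal_swap, Nat.sum_antidiagonal_eq_sum_range_succ_mk,
    min_eq_left (Nat.le_add_right i d)]
  refine sum_congr rfl fun t ht => ?_
  have ht : t ≤ i := mem_range_succ_iff.1 ht
  simp only [Prod.swap_prod_mk, Nat.sub_add_comm ht]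

theorem finsum_eq_sum_range_min {M : Type*} [AddCommMonoid M] (f : ℕ → ℕ → ℕ → M) (i j : ℕ) :
    ∑ᶠ (r : ℕ) (s : ℕ) (t : ℕ), (if r + t = i ∧ s + t = j then f r s t else 0) =
      ∑ t ∈ range (min i j + 1), f (i - t) (j - t) t := by
  let triple (t : ℕ) : ℕ × ℕ × ℕ := (i - t, j - t, t)
  have triple_inj : Function.Injective triple := fun t t' h => congrArg (fun p => p.2.2) h
  let g (p : ℕ × ℕ × ℕ) : M :=
    if p.1 + p.2.2 = i ∧ p.2.1 + p.2.2 = j then f p.1 p.2.1 p.2.2 else 0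
  have support_subset : g.support ⊆ ((range (min i j + 1)).image triple : Finset _) := by
    rintro ⟨r, s, t⟩ h
    obtain ⟨rfl, rfl⟩ : r + t = i ∧ s + t = j := by
      by_contra hne
      exact h (if_neg hne)
    simp [triple]
  calc ∑ᶠ (r : ℕ) (s : ℕ) (t : ℕ), g (r, s, t)
      = ∑ᶠ p, g p := (finsum_curry₃ g ((finite_toSet _).subset support_subset)).symm
    _ = ∑ p ∈ (range (min i j + 1)).image triple, g p :=
      finsum_eq_sum_of_support_subset g support_subset
    _ = ∑ t ∈ range (min i j + 1), g (triple t) := sum_image triple_inj.injOn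
    _ = ∑ t ∈ range (min i j + 1), f (i - t) (j - t) t := by
      refine sum_congr rfl fun t ht => if_pos ?_
      have := mem_range.1 ht
      simp only [triple]
      omega

variable {R : Type*} [CommRing R] {q : R}

@[simp]
theorem qPochhammerInv_zero : qPochhammerInv q 0 = 1 := prod_range_zero _

theorem one_sub_pow_mul_qPochhammerInv_succ {n : ℕ} (hq : IsUnit (1 - q ^ (n + 1))) :
    (1 - q ^ (n + 1)) * qPochhammerInv q (n + 1) = qPochhammerInv q n := by
  rw [qPochhammerInv, prod_range_succ, mul_left_comm, Ring.mul_inverse_cancel _ hq, mul_one,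
    qPochhammerInv]

/-- Cauchy's sum of `q^(r (r + d)) / ((q; q)_r (q; q)_(r + d) (q; q)_t)` over `r + t = n`, in which
`r` records the side of a Durfee rectangle. -/
noncomputable def durfeeSum (q : R) (n d : ℕ) : R :=
  ∑ p ∈ antidiagonal n, q ^ (p.1 * (p.1 + d)) *
    (qPochhammerInv q p.1 * qPochhammerInv q (p.1 + d) * qPochhammerInv q p.2)

/-- In `1 - q^(r + t) = (1 - q^t) + q^t (1 - q^r)` the first summand lowers `t` and the second
lowers `r` in the term indexed by `(r, t)`. -/
theorem one_sub_pow_mul_durfeeSum_succ (hq : ∀ n, IsUnit (1 - q ^ (n + 1))) (n d : ℕ) :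
    (1 - q ^ (n + 1)) * durfeeSum q (n + 1) d =
      durfeeSum q n d + q ^ (n + d + 1) * durfeeSum q n (d + 1) := by
  let u := qPochhammerInv q
  have hu (k : ℕ) : (1 - q ^ (k + 1)) * u (k + 1) = u k :=
    one_sub_pow_mul_qPochhammerInv_succ (hq k)
  let f (p : ℕ × ℕ) : R := q ^ (p.1 * (p.1 + d)) * (u p.1 * u (p.1 + d) * u p.2)
  have lower_t : ∑ p ∈ antidiagonal (n + 1), (1 - q ^ p.2) * f p = durfeeSum q n d := by
    rw [Nat.sum_antidiagonal_succ', durfeeSum]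
    simp only [pow_zero, sub_self, zero_mul, zero_add]
    refine sum_congr rfl fun p _ => ?_
    linear_combination q ^ (p.1 * (p.1 + d)) * u p.1 * u (p.1 + d) * hu p.2
  have lower_r : ∑ p ∈ antidiagonal (n + 1), q ^ p.2 * (1 - q ^ p.1) * f p =
      q ^ (n + d + 1) * durfeeSum q n (d + 1) := by
    rw [Nat.sum_antidiagonal_succ, durfeeSum, mul_sum]
    simp only [pow_zero, sub_self, mul_zero, zero_mul, zero_add]
    refine sum_congr rfl fun p hp => ?_
    simp only [f, ← mem_antidiagonal.1 hp, add_right_comm p.1 1 d, ← add_assoc p.1 d 1]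
    linear_combination q ^ (p.2 + (p.1 + 1) * (p.1 + d + 1)) * u (p.1 + d + 1) * u p.2 * hu p.1
  calc (1 - q ^ (n + 1)) * ∑ p ∈ antidiagonal (n + 1), f p
      = ∑ p ∈ antidiagonal (n + 1), ((1 - q ^ p.2) * f p + q ^ p.2 * (1 - q ^ p.1) * f p) := by
        rw [mul_sum]
        refine sum_congr rfl fun p hp => ?_
        rw [← mem_antidiagonal.1 hp]
        ring
    _ = durfeeSum q n d + q ^ (n + d + 1) * durfeeSum q n (d + 1) := by
        rw [sum_add_distrib, lower_t, lower_r]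

theorem durfeeSum_eq (hq : ∀ n, IsUnit (1 - q ^ (n + 1))) (n d : ℕ) :
    durfeeSum q n d = qPochhammerInv q n * qPochhammerInv q (n + d) := by
  induction n generalizing d with
  | zero => simp [durfeeSum]
  | succ n ih =>
    refine (hq n).mul_left_cancel ?_
    rw [one_sub_pow_mul_durfeeSum_succ hq, ih, ih, ← mul_assoc (1 - _),
      one_sub_pow_mul_qPochhammerInv_succ (hq n), ← add_assoc n d 1, add_right_comm n 1 d]
    linear_combination
      -qPochhammerInv q n * one_sub_pow_mul_qPochhammerInv_succ (hq (n + d))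

theorem type1Series_swap (r s t : ℕ) : type1Series q r s t = type1Series q s r t := by
  rw [type1Series, type1Series, add_comm r s, mul_comm (qPochhammerInv q r)]

theorem one_sub_pow_mul_type1Series_succ_left {r : ℕ} (hq : IsUnit (1 - q ^ (r + 1))) (s t : ℕ) :
    (1 - q ^ (r + 1)) * type1Series q (r + 1) s t =
      q ^ (r + s + t + 1) * type1Series q r s t := by
  have choose_succ : (r + 1 + s + t + 1).choose 2 = (r + s + t + 1) + (r + s + t + 1).choose 2 := by
    rw [add_right_comm r 1 s, add_right_comm (r + s) 1 t, Nat.choose_succ_succ' (r + s + t + 1),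
      Nat.choose_one_right]
  rw [type1Series, type1Series, choose_succ]
  linear_combination q ^ (r + s + t + 1 + (r + s + t + 1).choose 2 + (t + 1).choose 2) *
    qPochhammerInv q s * qPochhammerInv q t * one_sub_pow_mul_qPochhammerInv_succ hq

theorem one_sub_pow_mul_type1Series_succ_mid {s : ℕ} (hq : IsUnit (1 - q ^ (s + 1))) (r t : ℕ) :
    (1 - q ^ (s + 1)) * type1Series q r (s + 1) t =
      q ^ (r + s + t + 1) * type1Series q r s t := by
  rw [type1Series_swap, one_sub_pow_mul_type1Series_succ_left hq, type1Series_swap, add_comm s r]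

theorem one_sub_pow_mul_type1Series_succ_right {t : ℕ} (hq : IsUnit (1 - q ^ (t + 1))) (r s : ℕ) :
    (1 - q ^ (t + 1)) * type1Series q r s (t + 1) =
      q ^ (r + s + 2 * t + 2) * type1Series q r s t := by
  have choose_succ : (r + s + (t + 1) + 1).choose 2 + (t + 1 + 1).choose 2 =
      (r + s + 2 * t + 2) + ((r + s + t + 1).choose 2 + (t + 1).choose 2) := by
    rw [← add_assoc (r + s), Nat.choose_succ_succ' (r + s + t + 1), Nat.choose_succ_succ' (t + 1),
      Nat.choose_one_right, Nat.choose_one_right]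
    ring
  rw [type1Series, type1Series, choose_succ]
  linear_combination
    q ^ (r + s + 2 * t + 2 + ((r + s + t + 1).choose 2 + (t + 1).choose 2)) *
      qPochhammerInv q r * qPochhammerInv q s * one_sub_pow_mul_qPochhammerInv_succ hq

theorem sum_type1Series (hq : ∀ n, IsUnit (1 - q ^ (n + 1))) (i j : ℕ) :
    ∑ t ∈ range (min i j + 1), type1Series q (i - t) (j - t) t =
      type1Series q i 0 0 * type1Series q j 0 0 := by
  wlog hij : i ≤ j generalizing i j
  · rw [min_comm, mul_comm, ← this j i (Nat.le_of_not_le hij)]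
    exact sum_congr rfl fun t _ => type1Series_swap ..
  obtain ⟨d, rfl⟩ := Nat.exists_eq_add_of_le hij
  rw [sum_range_min_eq_sum_antidiagonal]
  calc ∑ p ∈ antidiagonal i, type1Series q p.1 (p.1 + d) p.2
      = ∑ p ∈ antidiagonal i, q ^ ((i + 1).choose 2 + (i + d + 1).choose 2) *
          (q ^ (p.1 * (p.1 + d)) *
            (qPochhammerInv q p.1 * qPochhammerInv q (p.1 + d) * qPochhammerInv q p.2)) := by
        refine sum_congr rfl fun p hp => ?_
        rw [← mem_antidiagonal.1 hp, ← mul_assoc (q ^ _) (q ^ _), ← pow_add,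
          add_right_comm p.1 p.2 d, ← choose_two_add_choose_two, type1Series]
    _ = type1Series q i 0 0 * type1Series q (i + d) 0 0 := by
        rw [← mul_sum, ← durfeeSum, durfeeSum_eq hq]
        simp only [type1Series, add_zero, qPochhammerInv_zero, mul_one]
        norm_num
        ring

end FiniteIdentities

section TypeOnePartitions

variable {k : ℕ} {c : PColor} {x : CPart} {π : List CPart} {κ : PColor → ℕ}

instance : Fintype PColor := ⟨{.a, .b, .ab}, fun c => by cases c <;> simp⟩

theorem sum_color {M : Type*} [AddCommMonoid M] (f : PColor → M) :
    ∑ c, f c = f .a + f .b + f .ab := by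
  have univ_eq : (univ : Finset PColor) = {.a, .b, .ab} := rfl
  simp [univ_eq, add_assoc]

/-- The least subscript that a part of color `c` may carry. -/
def minSubscript : PColor → ℕ
  | .ab => 2
  | _ => 1

/-- The least difference allowed between the subscript of a part of color `c` and that of the
part of color `d` that follows it. -/
def minGap : PColor → PColor → ℕ
  | .ab, _ => 2
  | .a, .b => 2
  | _, _ => 1

theorem minSubscript_le_minGap (c d : PColor) : minSubscript c ≤ minGap c d := by
  cases c <;> cases d <;> decide

theorem isType1_iff : IsType1 π ↔
    (∀ p ∈ π, minSubscript p.1 ≤ p.2) ∧ π.IsChain fun x y => y.2 + minGap x.1 y.1 ≤ x.2 := by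
  refine and_congr (forall₂_congr fun p _ => ?_) (iff_of_eq (congrArg (List.IsChain · π) ?_))
  · obtain ⟨_ | _ | _, m⟩ := p <;> grind [minSubscript]
  · ext ⟨_ | _ | _, m⟩ ⟨_ | _ | _, m'⟩ <;> grind [minGap]

theorem minSubscript_le_of_mem_getLast? (h : IsType1 π) (hx : x ∈ π.getLast?) :
    minSubscript x.1 ≤ x.2 :=
  (isType1_iff.1 h).1 x (List.mem_of_mem_getLast? hx)

/-- The list obtained from `π` by adding `k` to every subscript. -/
def raise (k : ℕ) (π : List CPart) : List CPart := π.map fun p => (p.1, p.2 + k)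

theorem raise_injective (k : ℕ) : Function.Injective (raise k) :=
  List.map_injective_iff.2 fun x y h => by simpa [Prod.ext_iff] using h

theorem wt_raise (k : ℕ) (π : List CPart) : wt (raise k π) = wt π + k * π.length := by
  simp [wt, raise, Function.comp_def, List.sum_map_add, mul_comm]

theorem colorCount_raise (c : PColor) (k : ℕ) (π : List CPart) :
    colorCount c (raise k π) = colorCount c π := by
  simp [colorCount, raise, List.filter_map, Function.comp_def]

theorem mem_getLast?_raise : x ∈ (raise k π).getLast? ↔ ∃ y ∈ π.getLast?, (y.1, y.2 + k) = x := by
  simp [raise, List.getLast?_map]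

theorem isType1_raise_iff : IsType1 (raise k π) ↔
    (∀ p ∈ π, minSubscript p.1 ≤ p.2 + k) ∧ π.IsChain fun x y => y.2 + minGap x.1 y.1 ≤ x.2 := by
  simp only [isType1_iff, raise, List.forall_mem_map, List.isChain_map, add_right_comm _ k,
    add_le_add_iff_right]

theorem isType1_raise (k : ℕ) (h : IsType1 π) : IsType1 (raise k π) := by
  obtain ⟨hmin, hchain⟩ := isType1_iff.1 h
  exact isType1_raise_iff.2 ⟨fun p hp => (hmin p hp).trans (Nat.le_add_right _ k), hchain⟩

theorem forall_minSubscript_add_le (h : IsType1 π)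
    (hlast : ∀ y ∈ π.getLast?, minSubscript y.1 + k ≤ y.2) :
    ∀ x ∈ π, minSubscript x.1 + k ≤ x.2 := by
  refine List.IsChain.backwards_induction (fun x => minSubscript x.1 + k ≤ x.2) π
    (isType1_iff.1 h).2 (fun {x y} hxy hy => ?_) fun hne => hlast _ ?_
  · have := minSubscript_le_minGap x.1 y.1
    omega
  · exact List.getLast_mem_getLast? hne

theorem exists_raise_eq (h : IsType1 π)
    (hlast : ∀ y ∈ π.getLast?, minSubscript y.1 + k ≤ y.2) :
    ∃ ρ, IsType1 ρ ∧ raise k ρ = π := by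
  have hmin := forall_minSubscript_add_le h hlast
  obtain ⟨ρ, rfl⟩ : π ∈ Set.range (raise k) := by
    refine ⟨π.map fun p => (p.1, p.2 - k), ?_⟩
    have lower_raise (p) (hp : p ∈ π) : (p.1, p.2 - k + k) = p :=
      Prod.ext rfl (Nat.sub_add_cancel (le_of_add_le_right (hmin p hp)))
    rw [raise, List.map_map]
    exact (List.map_congr_left lower_raise).trans π.map_id'
  refine ⟨ρ, isType1_iff.2 ⟨fun p hp => ?_, (isType1_raise_iff.1 h).2⟩, rfl⟩
  exact Nat.le_of_add_le_add_right (hmin (p.1, p.2 + k) (List.mem_map_of_mem hp))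

theorem isType1_concat_iff : IsType1 (π ++ [(c, minSubscript c)]) ↔
    IsType1 π ∧ ∀ y ∈ π.getLast?, minSubscript c + minGap y.1 c ≤ y.2 := by
  simp only [isType1_iff, List.isChain_append, List.forall_mem_append, List.forall_mem_singleton,
    List.isChain_singleton, List.head?_cons, Option.mem_some, forall_eq', true_and, le_refl,
    and_true, and_assoc]

theorem wt_concat (π : List CPart) (x : CPart) : wt (π ++ [x]) = wt π + x.2 := by
  simp [wt]

theorem colorCount_concat (c : PColor) (π : List CPart) (x : CPart) :
    colorCount c (π ++ [x]) = colorCount c π + (Pi.single x.1 1 : PColor → ℕ) c := by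
  by_cases h : x.1 = c
  · simp [colorCount, h]
  · simp [colorCount, h, Ne.symm h]

theorem colorCount_eq_zero_iff : colorCount c π = 0 ↔ ∀ x ∈ π, x.1 ≠ c := by
  simp [colorCount]

theorem length_eq_sum_colorCount (π : List CPart) : π.length = ∑ c, colorCount c π := by
  induction π using List.reverseRecOn with
  | nil => rfl
  | append_singleton π x ih => simp [colorCount_concat, sum_add_distrib, ih]

/-- The Type-1 partitions with `κ c` parts of each color `c`. -/
def type1 (κ : PColor → ℕ) : Set (List CPart) := {π | IsType1 π ∧ ∀ c, colorCount c π = κ c}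

/-- The partitions in `type1 κ` whose smallest part is the smallest symbol of color `c`. -/
def endingIn (c : PColor) (κ : PColor → ℕ) : Set (List CPart) :=
  {π ∈ type1 κ | (c, minSubscript c) ∈ π.getLast?}

theorem length_of_mem_type1 (h : π ∈ type1 κ) : π.length = ∑ c, κ c := by
  rw [length_eq_sum_colorCount, sum_congr rfl fun c _ => h.2 c]

theorem raise_mem_type1 (k : ℕ) (h : π ∈ type1 κ) : raise k π ∈ type1 κ :=
  ⟨isType1_raise k h.1, fun c => (colorCount_raise c k π).trans (h.2 c)⟩

theorem finiteFibers_type1 (κ : PColor → ℕ) : FiniteFibers wt (type1 κ) := by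
  have parts : FiniteFibers (Prod.snd : CPart → ℕ) {x | 0 < x.2} := fun n =>
    (Set.toFinite (Set.univ ×ˢ {n})).subset fun x hx => ⟨trivial, hx.2⟩
  exact parts.list.mono fun π h x hx => (h.1.1 x hx).1

theorem endingIn_subset (c : PColor) (κ : PColor → ℕ) : endingIn c κ ⊆ type1 κ :=
  Set.sep_subset _ _

theorem pairwise_disjoint_endingIn (κ : PColor → ℕ) :
    Pairwise (Function.onFun Disjoint fun c => endingIn c κ) := fun _ _ hcd =>
  Set.disjoint_left.2 fun _ h h' => hcd (congrArg Prod.fst (Option.mem_unique h.2 h'.2))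

theorem type1_zero : type1 0 = {[]} := by
  ext π
  refine ⟨fun h => List.length_eq_zero_iff.1 ?_, ?_⟩
  · simpa using length_of_mem_type1 h
  · rintro rfl
    exact ⟨by simp [isType1_iff], fun c => rfl⟩

theorem type1_sdiff_image_raise (κ : PColor → ℕ) :
    type1 κ \ raise 1 '' type1 κ = ⋃ c, endingIn c κ := by
  ext π
  refine ⟨fun ⟨hπ, hraise⟩ => ?_, fun hπ => ?_⟩
  · by_contra hending
    have hlast : ∀ y ∈ π.getLast?, minSubscript y.1 + 1 ≤ y.2 := fun y hy =>
      (minSubscript_le_of_mem_getLast? hπ.1 hy).lt_of_ne fun heq =>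
        hending (Set.mem_iUnion.2 ⟨y.1, hπ, heq ▸ hy⟩)
    obtain ⟨ρ, hρ, rfl⟩ := exists_raise_eq hπ.1 hlast
    exact hraise ⟨ρ, ⟨hρ, fun c => (colorCount_raise c 1 ρ).symm.trans (hπ.2 c)⟩, rfl⟩
  · obtain ⟨c, hπ, hlast⟩ := Set.mem_iUnion.1 hπ
    refine ⟨hπ, ?_⟩
    rintro ⟨ρ, hρ, rfl⟩
    obtain ⟨y, hy, heq⟩ := mem_getLast?_raise.1 hlast
    obtain ⟨rfl, hsub⟩ := Prod.mk.inj heq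
    have := minSubscript_le_of_mem_getLast? hρ.1 hy
    omega

theorem genFun_image_raise (κ : PColor → ℕ) :
    genFun wt (raise 1 '' type1 κ) = X ^ (∑ c, κ c) * genFun wt (type1 κ) :=
  genFun_image (raise_injective 1).injOn fun π hπ => by
    rw [wt_raise, one_mul, length_of_mem_type1 hπ]

theorem one_sub_pow_mul_genFun_type1 (κ : PColor → ℕ) :
    (1 - X ^ (∑ c, κ c)) * genFun wt (type1 κ) = ∑ c, genFun wt (endingIn c κ) := by
  rw [sub_mul, one_mul, ← genFun_image_raise, ← genFun_sdiff (finiteFibers_type1 κ)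
    (Set.image_subset_iff.2 fun π => raise_mem_type1 1), type1_sdiff_image_raise,
    genFun_iUnion (fun c => (finiteFibers_type1 κ).mono (endingIn_subset c κ))
      (pairwise_disjoint_endingIn κ)]

theorem endingIn_eq_empty (h : κ c = 0) : endingIn c κ = ∅ := by
  refine Set.eq_empty_of_forall_notMem fun π ⟨hπ, hlast⟩ => ?_
  exact colorCount_eq_zero_iff.1 ((hπ.2 c).trans h) _ (List.mem_of_mem_getLast? hlast) rfl

/-- Under `hk`, a final `(c, minSubscript c)` forces the part before it, and hence all other parts,
to exceed their least subscripts by at least `k`. -/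
theorem endingIn_add_single (κ : PColor → ℕ)
    (hk : ∀ d, minSubscript d + k ≤ minSubscript c + minGap d c) :
    endingIn c (κ + Pi.single c 1) = (fun ρ => raise k ρ ++ [(c, minSubscript c)]) ''
      {ρ ∈ type1 κ | ∀ y ∈ ρ.getLast?, minSubscript c + minGap y.1 c ≤ y.2 + k} := by
  ext π
  constructor
  · rintro ⟨⟨hπ, hcount⟩, hlast⟩
    obtain ⟨π, rfl⟩ := List.getLast?_eq_some_iff.1 hlast
    obtain ⟨hπ, hgap⟩ := isType1_concat_iff.1 hπ
    obtain ⟨ρ, hρ, rfl⟩ := exists_raise_eq hπ fun y hy => (hk y.1).trans (hgap y hy)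
    refine ⟨ρ, ⟨⟨hρ, fun d => ?_⟩, fun y hy => ?_⟩, rfl⟩
    · have := hcount d
      rwa [colorCount_concat, colorCount_raise, Pi.add_apply, Nat.add_right_cancel_iff] at this
    · exact hgap _ (mem_getLast?_raise.2 ⟨y, hy, rfl⟩)
  · rintro ⟨ρ, ⟨⟨hρ, hcount⟩, hgap⟩, rfl⟩
    refine ⟨⟨isType1_concat_iff.2 ⟨isType1_raise k hρ, fun x hx => ?_⟩, fun d => ?_⟩, ?_⟩
    · obtain ⟨y, hy, rfl⟩ := mem_getLast?_raise.1 hx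
      exact hgap y hy
    · rw [colorCount_concat, colorCount_raise, hcount, Pi.add_apply]
    · exact List.getLast?_concat

theorem genFun_endingIn_add_single (κ : PColor → ℕ)
    (hk : ∀ d, minSubscript d + k ≤ minSubscript c + minGap d c) :
    genFun wt (endingIn c (κ + Pi.single c 1)) = X ^ (k * ∑ d, κ d + minSubscript c) *
      genFun wt {ρ ∈ type1 κ | ∀ y ∈ ρ.getLast?, minSubscript c + minGap y.1 c ≤ y.2 + k} := by
  rw [endingIn_add_single κ hk]
  refine genFun_image (fun ρ _ ρ' _ h => raise_injective k (List.append_cancel_right h))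
    fun ρ hρ => ?_
  rw [wt_concat, wt_raise, length_of_mem_type1 hρ.1, add_assoc]

theorem genFun_endingIn_add_single_of_eq (κ : PColor → ℕ)
    (hk : ∀ d, minSubscript d + k = minSubscript c + minGap d c) :
    genFun wt (endingIn c (κ + Pi.single c 1)) =
      X ^ (k * ∑ d, κ d + minSubscript c) * genFun wt (type1 κ) := by
  rw [genFun_endingIn_add_single κ fun d => (hk d).le, Set.sep_eq_self_iff_mem_true.2]
  intro ρ hρ y hy
  rw [← hk]
  exact Nat.add_le_add_right (minSubscript_le_of_mem_getLast? hρ.1 hy) k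

theorem genFun_endingIn_a_add_single (κ : PColor → ℕ) :
    genFun wt (endingIn .a (κ + Pi.single .a 1)) = X ^ (∑ c, κ c + 1) * genFun wt (type1 κ) := by
  simpa [minSubscript] using
    genFun_endingIn_add_single_of_eq (c := .a) (k := 1) κ (by rintro (_ | _ | _) <;> rfl)

theorem genFun_endingIn_ab_add_single (κ : PColor → ℕ) :
    genFun wt (endingIn .ab (κ + Pi.single .ab 1)) =
      X ^ (2 * ∑ c, κ c + 2) * genFun wt (type1 κ) := by
  simpa [minSubscript] using
    genFun_endingIn_add_single_of_eq (c := .ab) (k := 2) κ (by rintro (_ | _ | _) <;> rfl)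

/-- Of the lowered partitions, exactly those ending in `a_1` are lost: the gap between `a_2` and
`b_1` is too small. -/
theorem genFun_endingIn_b_add_single (κ : PColor → ℕ) :
    genFun wt (endingIn .b (κ + Pi.single .b 1)) =
      X ^ (∑ c, κ c + 1) * (genFun wt (type1 κ) - genFun wt (endingIn .a κ)) := by
  have not_endingIn_a :
      {ρ ∈ type1 κ | ∀ y ∈ ρ.getLast?, minSubscript .b + minGap y.1 .b ≤ y.2 + 1} =
        type1 κ \ endingIn .a κ := by
    ext ρ
    refine and_congr_right fun hρ => ⟨fun h hend => absurd (h _ hend.2) (by decide), ?_⟩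
    intro hend y hy
    have hne : y ≠ (.a, minSubscript .a) := fun heq => hend ⟨hρ, heq ▸ hy⟩
    have := minSubscript_le_of_mem_getLast? hρ.1 hy
    obtain ⟨_ | _ | _, m⟩ := y <;> grind [minSubscript, minGap]
  rw [genFun_endingIn_add_single (k := 1) κ (by rintro (_ | _ | _) <;> decide), not_endingIn_a,
    genFun_sdiff (finiteFibers_type1 κ) (endingIn_subset .a κ), one_mul]
  rfl

theorem isUnit_one_sub_X_pow_succ {R : Type*} [CommRing R] (n : ℕ) :
    IsUnit (1 - X ^ (n + 1) : R⟦X⟧) := by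
  simp [isUnit_iff_constantCoeff]

theorem eq_zero_or_eq_add_single {ι : Type*} [DecidableEq ι] (i : ι) (κ : ι → ℕ) :
    κ i = 0 ∨ ∃ κ' : ι → ℕ, κ = κ' + Pi.single i 1 := by
  refine (κ i).eq_zero_or_pos.imp_right fun h => ⟨κ - Pi.single i 1, ?_⟩
  have single_le : Pi.single i 1 ≤ κ := update_le_iff.2 ⟨h, fun j _ => (κ j).zero_le⟩
  exact (tsub_add_cancel_of_le single_le).symm

/-- `type1Series X` with its three indices read off a count of parts by color. -/
noncomputable def colorSeries (κ : PColor → ℕ) : ℤ⟦X⟧ := type1Series X (κ .a) (κ .b) (κ .ab)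

theorem sum_lt_sum_add_single {ι : Type*} [Fintype ι] [DecidableEq ι] (i : ι) (κ : ι → ℕ) :
    ∑ j, κ j < ∑ j, (κ + Pi.single i 1 : ι → ℕ) j := by
  simp [sum_add_distrib]

theorem genFun_endingIn_a (κ : PColor → ℕ)
    (ih : ∀ κ', ∑ c, κ' c < ∑ c, κ c → genFun wt (type1 κ') = colorSeries κ') :
    genFun wt (endingIn .a κ) = (1 - X ^ κ .a) * colorSeries κ := by
  obtain h | ⟨κ, rfl⟩ := eq_zero_or_eq_add_single .a κ
  · simp [endingIn_eq_empty h, h]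
  · rw [genFun_endingIn_a_add_single, ih κ (sum_lt_sum_add_single .a κ), sum_color]
    simpa [colorSeries] using
      (one_sub_pow_mul_type1Series_succ_left (isUnit_one_sub_X_pow_succ (κ .a)) (κ .b) (κ .ab)).symm

theorem genFun_endingIn_b (κ : PColor → ℕ)
    (ih : ∀ κ', ∑ c, κ' c < ∑ c, κ c → genFun wt (type1 κ') = colorSeries κ') :
    genFun wt (endingIn .b κ) = X ^ κ .a * (1 - X ^ κ .b) * colorSeries κ := by
  obtain h | ⟨κ, rfl⟩ := eq_zero_or_eq_add_single .b κ
  · simp [endingIn_eq_empty h, h]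
  · have hlt := sum_lt_sum_add_single .b κ
    rw [genFun_endingIn_b_add_single, genFun_endingIn_a κ fun κ' h => ih κ' (h.trans hlt), ih κ hlt,
      sum_color]
    simp only [colorSeries, Pi.add_apply, Pi.single_apply, reduceCtorEq, if_true, if_false,
      add_zero]
    have hunit : IsUnit (1 - X ^ (κ .b + 1) : ℤ⟦X⟧) := isUnit_one_sub_X_pow_succ _
    linear_combination -X ^ κ .a * one_sub_pow_mul_type1Series_succ_mid hunit (κ .a) (κ .ab)

theorem genFun_endingIn_ab (κ : PColor → ℕ)
    (ih : ∀ κ', ∑ c, κ' c < ∑ c, κ c → genFun wt (type1 κ') = colorSeries κ') :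
    genFun wt (endingIn .ab κ) = X ^ (κ .a + κ .b) * (1 - X ^ κ .ab) * colorSeries κ := by
  obtain h | ⟨κ, rfl⟩ := eq_zero_or_eq_add_single .ab κ
  · simp [endingIn_eq_empty h, h]
  · rw [genFun_endingIn_ab_add_single, ih κ (sum_lt_sum_add_single .ab κ), sum_color]
    simp only [colorSeries, Pi.add_apply, Pi.single_apply, reduceCtorEq, if_true, if_false,
      add_zero]
    have hunit : IsUnit (1 - X ^ (κ .ab + 1) : ℤ⟦X⟧) := isUnit_one_sub_X_pow_succ _
    linear_combination -X ^ (κ .a + κ .b) *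
      one_sub_pow_mul_type1Series_succ_right hunit (κ .a) (κ .b)

theorem genFun_type1 (κ : PColor → ℕ) : genFun wt (type1 κ) = colorSeries κ := by
  induction hsize : ∑ c, κ c using Nat.strong_induction_on generalizing κ with
  | _ size ih =>
    subst hsize
    have ih (κ') (h : ∑ c, κ' c < ∑ c, κ c) : genFun wt (type1 κ') = colorSeries κ' :=
      ih _ h κ' rfl
    obtain h | h := Nat.eq_zero_or_eq_succ_pred (∑ c, κ c)
    · have hκ : κ = 0 := funext fun c => by simpa using sum_eq_zero_iff.1 h c (mem_univ c)
      simp [hκ, type1_zero, colorSeries, type1Series, wt]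
    · have hunit : IsUnit (1 - X ^ (∑ c, κ c) : ℤ⟦X⟧) := h ▸ isUnit_one_sub_X_pow_succ _
      refine hunit.mul_left_cancel ?_
      rw [one_sub_pow_mul_genFun_type1, sum_color, sum_color, genFun_endingIn_a κ ih,
        genFun_endingIn_b κ ih, genFun_endingIn_ab κ ih]
      ring

end TypeOnePartitions

section VectorPartitions

/-- The partitions into `i` distinct positive parts, as decreasing lists. -/
def distinctPartitions (i : ℕ) : Set (List ℕ) :=
  {l | l.IsChain (· > ·) ∧ (∀ x ∈ l, 0 < x) ∧ l.length = i}

/-- The assignment of the number `r` to `a`, `s` to `b` and `t` to `ab`. -/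
def colorCounts (r s t : ℕ) : PColor → ℕ
  | .a => r
  | .b => s
  | .ab => t

theorem finiteFibers_distinctPartitions (i : ℕ) : FiniteFibers List.sum (distinctPartitions i) := by
  have parts : FiniteFibers id {x : ℕ | 0 < x} := fun n =>
    (Set.finite_singleton n).subset Set.inter_subset_right
  simpa using parts.list.mono fun l (h : l ∈ distinctPartitions i) => h.2.1

theorem mem_type1_colorCounts_iff {π : List CPart} {r s t : ℕ} :
    π ∈ type1 (colorCounts r s t) ↔ IsType1 π ∧
      colorCount .a π = r ∧ colorCount .b π = s ∧ colorCount .ab π = t :=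
  and_congr_right fun _ => ⟨fun h => ⟨h .a, h .b, h .ab⟩,
    fun ⟨ha, hb, hab⟩ => fun | .a => ha | .b => hb | .ab => hab⟩

theorem map_color_a_mem_type1_iff {i : ℕ} {l : List ℕ} :
    l.map (Prod.mk .a) ∈ type1 (colorCounts i 0 0) ↔ l ∈ distinctPartitions i := by
  have isType1_map : IsType1 (l.map (Prod.mk .a)) ↔ (∀ x ∈ l, 0 < x) ∧ l.IsChain (· > ·) := by
    simp [isType1_iff, List.isChain_map, minSubscript, minGap, Nat.succ_le_iff]
  have colorCount_map (c : PColor) :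
      colorCount c (l.map (Prod.mk .a)) = if c = .a then l.length else 0 := by
    cases c <;> simp [colorCount, List.filter_map, Function.comp_def]
  simp only [mem_type1_colorCounts_iff, isType1_map, colorCount_map, distinctPartitions,
    reduceCtorEq, if_true, if_false, and_true, and_assoc, and_left_comm, Set.mem_ofPred_eq]

theorem image_color_a_distinctPartitions (i : ℕ) :
    List.map (Prod.mk .a) '' distinctPartitions i = type1 (colorCounts i 0 0) := by
  ext π
  refine ⟨?_, fun h => ?_⟩
  · rintro ⟨l, hl, rfl⟩
    exact map_color_a_mem_type1_iff.2 hl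
  · have color_a (x) (hx : x ∈ π) : (.a, x.2) = x := by
      have not_b := colorCount_eq_zero_iff.1 (h.2 .b) x hx
      have not_ab := colorCount_eq_zero_iff.1 (h.2 .ab) x hx
      obtain ⟨_ | _ | _, m⟩ := x <;> trivial
    have map_eq : (π.map Prod.snd).map (Prod.mk .a) = π := by
      rw [List.map_map]
      exact (List.map_congr_left color_a).trans π.map_id'
    exact ⟨π.map Prod.snd, map_color_a_mem_type1_iff.1 (map_eq.symm ▸ h), map_eq⟩

theorem genFun_distinctPartitions (i : ℕ) :
    genFun List.sum (distinctPartitions i) = type1Series X i 0 0 := by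
  have hinj : Function.Injective (List.map (Prod.mk PColor.a) : List ℕ → List CPart) :=
    List.map_injective_iff.2 (Prod.mk_right_injective _)
  have hwt (l : List ℕ) : wt (l.map (Prod.mk .a)) = l.sum := by simp [wt, Function.comp_def]
  have genFun_eq :=
    genFun_image (v := wt) (k := 0) hinj.injOn fun l (_ : l ∈ distinctPartitions i) => hwt l
  rw [pow_zero, one_mul, image_color_a_distinctPartitions, genFun_type1] at genFun_eq
  exact genFun_eq.symm

theorem V_eq_coeff (n i j : ℕ) :
    (V n i j : ℤ) = coeff n (type1Series X i 0 0 * type1Series X j 0 0 : ℤ⟦X⟧) := by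
  rw [← genFun_distinctPartitions, ← genFun_distinctPartitions, ← genFun_prod
    (finiteFibers_distinctPartitions i) (finiteFibers_distinctPartitions j), coeff_genFun, V]
  congr 2
  ext p
  simp only [distinctPartitions, Set.mem_inter_iff, Set.mem_prod, Set.mem_preimage,
    Set.mem_singleton_iff, Set.mem_ofPred_eq]
  tauto

theorem S_eq_coeff (n r s t : ℕ) : (S n r s t : ℤ) = coeff n (type1Series X r s t : ℤ⟦X⟧) := by
  have fiber_eq : type1 (colorCounts r s t) ∩ wt ⁻¹' {n} = {π | IsType1 π ∧
      colorCount .a π = r ∧ colorCount .b π = s ∧ colorCount .ab π = t ∧ wt π = n} := by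
    ext π
    simp only [Set.mem_inter_iff, mem_type1_colorCounts_iff, Set.mem_preimage,
      Set.mem_singleton_iff, and_assoc, Set.mem_ofPred_eq]
  rw [S, ← fiber_eq, ← coeff_genFun, genFun_type1]
  rfl

end VectorPartitions

end AlladiGordon

/-- Theorem 1 (Alladi–Gordon): `V(n; i, j) = ∑_{r+t=i, s+t=j} S(n; r, s, t)`. -/
theorem alladi_gordon_refined_schur (n i j : ℕ) :
    V n i j = ∑ᶠ (r : ℕ) (s : ℕ) (t : ℕ),
      (if r + t = i ∧ s + t = j then S n r s t else 0) := by
  rw [AlladiGordon.finsum_eq_sum_range_min, ← Nat.cast_inj (R := ℤ), Nat.cast_sum,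
    AlladiGordon.V_eq_coeff, ← AlladiGordon.sum_type1Series AlladiGordon.isUnit_one_sub_X_pow_succ,
    map_sum]
  simp only [AlladiGordon.S_eq_coeff]
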